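/- Fix D ∈ ℍ^{m×n}, Ω ⊆ Fin m × Fin n, and λ > 0. Let Z^k = (A^k, B^k, X^k) satisfy the LRQD recurrences (X^k_{ij} = D_{ij} on Ω and = (A^k·B^k)_{ij} off Ω; A^{k+1} = (X^k·(B^k)ᴴ + λ·A^k)·(B^k·(B^k)ᴴ + λ·I)⁻¹; B^{k+1} = ((A^{k+1})ᴴ·A^{k+1} + λ·I)⁻¹·((A^{k+1})ᴴ·X^k + λ·B^k)), let f(A,B,X) = ½‖A·B − X‖_F². Assume {Z^k} is bounded and converges to Z#, and that the Kurdyka–Łojasiewicz inequality holds along the sequence with an exponent θ satisfying 1/2 < θ < 1: there exists μ > 0 such that |f(Z^k) − f(Z#)|^θ ≤ μ·G(Z^k) for all k. Then there exists β > 0 such that ‖Z^k − Z#‖ ≤ β·k^{−(1−θ)/(2θ−1)} for all k ≥ 1. -/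

import Mathlib

/-!
Each half-step of the iteration is a proximal least-squares step, whose optimality condition says
that the new partial gradient equals `λ` times the displacement. Expanding the squared residual
around the new point then gives sufficient decrease of the objective by a multiple of the squared
step length, and comparing the gradients at the old and new points bounds the projected gradient by
the step length.

For `s k = f (Z k) - f Z#` and `d k = ‖Z (k + 1) - Z k‖` the Kurdyka–Łojasiewicz inequality
therefore becomes `s k ^ θ ≤ C * d k`. With sufficient decrease `s (k + 1) ≤ s k - c * d k ^ 2` this
has two consequences: `s k` obeys `s (k + 1) ≤ s k - a * s k ^ (2 * θ)`, hence decays like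
`k ^ (-1 / (2 * θ - 1))`, and `d k` is at most a multiple of
`s k ^ (1 - θ) - s (k + 1) ^ (1 - θ)`, so that the distance to the limit telescopes to
`O (s k ^ (1 - θ))`.
-/

open scoped Quaternion Matrix
open Filter

/-- The Frobenius norm of a quaternion matrix. -/
noncomputable def frob {m n : ℕ} (A : Matrix (Fin m) (Fin n) ℍ[ℝ]) : ℝ :=
  Real.sqrt (∑ i, ∑ j, ‖A i j‖ ^ 2)

/-- The norm of a triple (A, B, X). -/
noncomputable def tnorm {m r n : ℕ} (A : Matrix (Fin m) (Fin r) ℍ[ℝ])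
    (B : Matrix (Fin r) (Fin n) ℍ[ℝ]) (X : Matrix (Fin m) (Fin n) ℍ[ℝ]) : ℝ :=
  Real.sqrt (frob A ^ 2 + frob B ^ 2 + frob X ^ 2)

/-- The projected-gradient norm G(A,B,X). -/
noncomputable def pgnorm {m r n : ℕ} (Ω : Set (Fin m × Fin n)) [DecidablePred (· ∈ Ω)]
    (A : Matrix (Fin m) (Fin r) ℍ[ℝ]) (B : Matrix (Fin r) (Fin n) ℍ[ℝ])
    (X : Matrix (Fin m) (Fin n) ℍ[ℝ]) : ℝ :=
  Real.sqrt (frob ((A * B - X) * Bᴴ) ^ 2 + frob (Aᴴ * (A * B - X)) ^ 2 +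
    ∑ p : Fin m × Fin n, if p ∈ Ω then 0 else ‖(X - A * B) p.1 p.2‖ ^ 2)

section KurdykaLojasiewicz

open scoped Topology

lemma one_sub_rpow_mul_one_add_le_one {x p : ℝ} (hx : x ≤ 1) (hp : 0 ≤ p) :
    (1 - x) ^ p * (1 + p * x) ≤ 1 := by
  have : 0 ≤ 1 - x := sub_nonneg.2 hx
  calc (1 - x) ^ p * (1 + p * x)
      ≤ (1 - x) ^ p * Real.exp (p * x) := by
        gcongr
        linarith [Real.add_one_le_exp (p * x)]
    _ ≤ Real.exp (-x) ^ p * Real.exp (p * x) := by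
        gcongr
        exact Real.one_sub_le_exp_neg x
    _ = 1 := by
        rw [← Real.exp_mul, ← Real.exp_add, neg_mul, mul_comm, neg_add_cancel, Real.exp_zero]

/-- The recursion makes `s k ^ (-p)` grow by at least `p * a` per step; the claim avoids the inverse
so that it also covers `s k = 0`. -/
lemma mul_rpow_le_one_of_le_sub_mul_rpow {s : ℕ → ℝ} {a p : ℝ} (hs : ∀ k, 0 ≤ s k) (ha : 0 ≤ a)
    (hp : 0 < p) (hrec : ∀ k, s (k + 1) ≤ s k - a * s k ^ (1 + p)) (k : ℕ) :
    p * a * k * s k ^ p ≤ 1 := by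
  induction k with
  | zero => simp
  | succ k ih =>
    set x := a * s k ^ p with hx
    have : 0 ≤ x := mul_nonneg ha (Real.rpow_nonneg (hs k) p)
    have hfactor : s (k + 1) ≤ s k * (1 - x) := by
      have := hrec k
      rw [Real.rpow_add' (hs k) (by linarith), Real.rpow_one] at this
      linarith
    rcases (hs (k + 1)).eq_or_lt with hzero | hpos
    · simp [← hzero, Real.zero_rpow hp.ne']
    have hx1 : 0 < 1 - x := pos_of_mul_pos_right (hpos.trans_le hfactor) (hs k)
    have hpow : s (k + 1) ^ p ≤ s k ^ p * (1 - x) ^ p := by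
      rw [← Real.mul_rpow (hs k) hx1.le]
      exact Real.rpow_le_rpow hpos.le hfactor hp.le
    calc p * a * (k + 1 : ℕ) * s (k + 1) ^ p
        ≤ p * a * (k + 1 : ℕ) * (s k ^ p * (1 - x) ^ p) := by gcongr
      _ = (1 - x) ^ p * (p * a * k * s k ^ p + p * x) := by push_cast; rw [hx]; ring
      _ ≤ (1 - x) ^ p * (1 + p * x) := by gcongr
      _ ≤ 1 := one_sub_rpow_mul_one_add_le_one (by linarith) hp.le

lemma rpow_le_mul_natCast_rpow_of_le_sub_mul_rpow {s : ℕ → ℝ} {a p q : ℝ} (hs : ∀ k, 0 ≤ s k)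
    (ha : 0 < a) (hp : 0 < p) (hq : 0 ≤ q) (hrec : ∀ k, s (k + 1) ≤ s k - a * s k ^ (1 + p))
    {k : ℕ} (hk : 1 ≤ k) :
    s k ^ q ≤ (p * a) ^ (-q / p) * (k : ℝ) ^ (-q / p) := by
  have hk0 : (0 : ℝ) < k := by exact_mod_cast hk
  have hpow : s k ^ p ≤ (p * a * k)⁻¹ := by
    rw [← one_div, le_div_iff₀' (by positivity)]
    exact mul_rpow_le_one_of_le_sub_mul_rpow hs ha.le hp hrec k
  calc s k ^ q = (s k ^ p) ^ (q / p) := by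
        rw [← Real.rpow_mul (hs k), mul_div_cancel₀ _ hp.ne']
    _ ≤ ((p * a * k)⁻¹) ^ (q / p) :=
        Real.rpow_le_rpow (Real.rpow_nonneg (hs k) p) hpow (by positivity)
    _ = (p * a) ^ (-q / p) * (k : ℝ) ^ (-q / p) := by
        rw [Real.inv_rpow (by positivity), ← Real.rpow_neg (by positivity), ← neg_div,
          Real.mul_rpow (by positivity) hk0.le]

lemma one_sub_mul_sub_le_rpow_mul_rpow_sub_rpow {x y θ : ℝ} (hx : 0 ≤ x) (hy : 0 ≤ y)
    (hθ0 : 0 ≤ θ) (hθ1 : θ ≤ 1) :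
    (1 - θ) * (x - y) ≤ x ^ θ * (x ^ (1 - θ) - y ^ (1 - θ)) := by
  have hyoung : x ^ θ * y ^ (1 - θ) ≤ θ * x + (1 - θ) * y :=
    Real.geom_mean_le_arith_mean2_weighted hθ0 (sub_nonneg.2 hθ1) hx hy (by ring)
  have hsplit : x ^ θ * x ^ (1 - θ) = x := by
    rw [← Real.rpow_add' hx (by norm_num), add_sub_cancel, Real.rpow_one]
  rw [mul_sub (x ^ θ), hsplit]
  linarith

lemma mul_le_rpow_sub_rpow_of_sq_le_sub {x y d θ c C : ℝ} (hx : 0 ≤ x) (hy : 0 ≤ y) (hd : 0 ≤ d)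
    (hθ0 : 0 ≤ θ) (hθ1 : θ ≤ 1) (hc : 0 ≤ c) (hC : 0 ≤ C) (hdecrease : y + c * d ^ 2 ≤ x)
    (hKL : x ^ θ ≤ C * d) :
    (1 - θ) * c * d ≤ C * (x ^ (1 - θ) - y ^ (1 - θ)) := by
  have hyx : y ≤ x := le_trans (by nlinarith [sq_nonneg d]) hdecrease
  have hgap : 0 ≤ x ^ (1 - θ) - y ^ (1 - θ) :=
    sub_nonneg.2 (Real.rpow_le_rpow hy hyx (sub_nonneg.2 hθ1))
  rcases hd.eq_or_lt with rfl | hd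
  · simpa using mul_nonneg hC hgap
  refine le_of_mul_le_mul_right ?_ hd
  calc (1 - θ) * c * d * d = (1 - θ) * (c * d ^ 2) := by ring
    _ ≤ (1 - θ) * (x - y) := by
        have : 0 ≤ 1 - θ := sub_nonneg.2 hθ1
        gcongr
        linarith
    _ ≤ x ^ θ * (x ^ (1 - θ) - y ^ (1 - θ)) :=
        one_sub_mul_sub_le_rpow_mul_rpow_sub_rpow hx hy hθ0 hθ1
    _ ≤ C * d * (x ^ (1 - θ) - y ^ (1 - θ)) := by gcongr
    _ = C * (x ^ (1 - θ) - y ^ (1 - θ)) * d := by ring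

lemma le_sub_mul_rpow_of_sq_le_sub {x y d θ c C : ℝ} (hx : 0 ≤ x) (hc : 0 ≤ c) (hC : 0 < C)
    (hdecrease : y + c * d ^ 2 ≤ x) (hKL : x ^ θ ≤ C * d) :
    y ≤ x - c / C ^ 2 * x ^ (2 * θ) := by
  have hsq : x ^ (2 * θ) ≤ (C * d) ^ 2 := by
    rw [mul_comm 2 θ, Real.rpow_mul hx, Real.rpow_two]
    exact pow_le_pow_left₀ (Real.rpow_nonneg hx θ) hKL 2
  have hstep : c / C ^ 2 * x ^ (2 * θ) ≤ c * d ^ 2 := by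
    calc c / C ^ 2 * x ^ (2 * θ) ≤ c / C ^ 2 * (C * d) ^ 2 := by gcongr
      _ = c * d ^ 2 := by field_simp
  linarith

lemma dist_le_of_dist_succ_le_sub {α : Type*} [PseudoMetricSpace α] {z : ℕ → α} {z' : α}
    {u : ℕ → ℝ} (hu : ∀ k, 0 ≤ u k) (hdist : ∀ k, dist (z k) (z (k + 1)) ≤ u k - u (k + 1))
    (hz : Tendsto z atTop (𝓝 z')) (k : ℕ) : dist (z k) z' ≤ u k := by
  refine le_of_tendsto (tendsto_const_nhds.dist hz) ?_
  filter_upwards [eventually_ge_atTop k] with j hkj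
  calc dist (z k) (z j) ≤ ∑ i ∈ Finset.Ico k j, (u i - u (i + 1)) :=
        dist_le_Ico_sum_of_dist_le hkj fun _ _ => hdist _
    _ = u k - u j := by
        rw [← neg_sub (u j), ← Finset.sum_Ico_sub u hkj, ← Finset.sum_neg_distrib]
        simp only [neg_sub]
    _ ≤ u k := sub_le_self _ (hu j)

theorem exists_dist_le_mul_rpow_of_kurdykaLojasiewicz {α : Type*} [PseudoMetricSpace α]
    {z : ℕ → α} {z' : α} {s : ℕ → ℝ} {θ c C : ℝ} (hθ0 : 1 / 2 < θ) (hθ1 : θ < 1) (hc : 0 < c)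
    (hC : 0 < C) (hs : ∀ k, 0 ≤ s k)
    (hdecrease : ∀ k, s (k + 1) + c * dist (z k) (z (k + 1)) ^ 2 ≤ s k)
    (hKL : ∀ k, s k ^ θ ≤ C * dist (z k) (z (k + 1))) (hz : Tendsto z atTop (𝓝 z')) :
    ∃ β : ℝ, 0 < β ∧ ∀ k : ℕ, 1 ≤ k →
      dist (z k) z' ≤ β * (k : ℝ) ^ (-(1 - θ) / (2 * θ - 1)) := by
  have hθ : 0 < 1 - θ := sub_pos.2 hθ1
  have hp : 0 < 2 * θ - 1 := by linarith
  set L := C / ((1 - θ) * c) with hL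
  have hL0 : 0 < L := by positivity
  have hlength (k) : dist (z k) (z (k + 1)) ≤ L * s k ^ (1 - θ) - L * s (k + 1) ^ (1 - θ) := by
    rw [← mul_sub, hL, div_mul_eq_mul_div, le_div_iff₀' (by positivity)]
    exact mul_le_rpow_sub_rpow_of_sq_le_sub (hs k) (hs (k + 1)) dist_nonneg (by linarith) hθ1.le
      hc.le hC.le (hdecrease k) (hKL k)
  have hrec (k) : s (k + 1) ≤ s k - c / C ^ 2 * s k ^ (1 + (2 * θ - 1)) := by
    rw [add_sub_cancel]
    exact le_sub_mul_rpow_of_sq_le_sub (hs k) hc.le hC (hdecrease k) (hKL k)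
  refine ⟨L * ((2 * θ - 1) * (c / C ^ 2)) ^ (-(1 - θ) / (2 * θ - 1)), by positivity,
    fun k hk => ?_⟩
  calc dist (z k) z' ≤ L * s k ^ (1 - θ) :=
        dist_le_of_dist_succ_le_sub
          (fun j => mul_nonneg hL0.le (Real.rpow_nonneg (hs j) _)) hlength hz k
    _ ≤ L * (((2 * θ - 1) * (c / C ^ 2)) ^ (-(1 - θ) / (2 * θ - 1)) *
          (k : ℝ) ^ (-(1 - θ) / (2 * θ - 1))) := by
        gcongr
        exact rpow_le_mul_natCast_rpow_of_le_sub_mul_rpow hs (by positivity) hp hθ.le hrec hk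
    _ = _ := (mul_assoc _ _ _).symm

end KurdykaLojasiewicz

open scoped Topology in
lemma tendsto_matrix_mul {ι m n r R : Type*} [Fintype r] [NonUnitalNonAssocSemiring R]
    [TopologicalSpace R] [IsTopologicalSemiring R] {l : Filter ι} {A : ι → Matrix m r R}
    {B : ι → Matrix r n R} {A' : Matrix m r R} {B' : Matrix r n R} (hA : Tendsto A l (𝓝 A'))
    (hB : Tendsto B l (𝓝 B')) : Tendsto (fun i => A i * B i) l (𝓝 (A' * B')) := by
  have hmul : Continuous fun P : Matrix m r R × Matrix r n R => P.1 * P.2 :=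
    continuous_fst.matrix_mul continuous_snd
  have hcomp := (hmul.tendsto (A', B')).comp (hA.prodMk_nhds hB)
  exact hcomp

section Frobenius

open scoped Matrix.Norms.Frobenius RealInnerProductSpace

variable {m n r : Type*} [Fintype m] [Fintype n] [Fintype r]

lemma frobenius_norm_sq {E : Type*} [SeminormedAddCommGroup E] (A : Matrix m n E) :
    ‖A‖ ^ 2 = ∑ i, ∑ j, ‖A i j‖ ^ 2 := by
  rw [Matrix.frobenius_norm_def, ← Real.sqrt_eq_rpow, Real.sq_sqrt (by positivity)]
  simp only [Real.rpow_two]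

lemma frobenius_norm_mono {E F : Type*} [SeminormedAddCommGroup E] [SeminormedAddCommGroup F]
    {A : Matrix m n E} {B : Matrix m n F} (h : ∀ i j, ‖A i j‖ ≤ ‖B i j‖) : ‖A‖ ≤ ‖B‖ := by
  rw [← sq_le_sq₀ (norm_nonneg A) (norm_nonneg B), frobenius_norm_sq, frobenius_norm_sq]
  gcongr with i _ j _
  exact h i j

lemma frobenius_norm_mul_le {R : Type*} [NonUnitalSeminormedRing R] (A : Matrix m r R)
    (B : Matrix r n R) : ‖A * B‖ ≤ ‖A‖ * ‖B‖ := by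
  rw [← sq_le_sq₀ (norm_nonneg _) (by positivity), mul_pow, frobenius_norm_sq, frobenius_norm_sq,
    frobenius_norm_sq, Finset.sum_comm (f := fun k j => ‖B k j‖ ^ 2), Finset.sum_mul_sum]
  gcongr with i _ j _
  calc ‖(A * B) i j‖ ^ 2 ≤ (∑ k, ‖A i k‖ * ‖B k j‖) ^ 2 := by
        gcongr
        exact norm_sum_le_of_le _ fun k _ => norm_mul_le _ _
    _ ≤ (∑ k, ‖A i k‖ ^ 2) * ∑ k, ‖B k j‖ ^ 2 := Finset.sum_mul_sq_le_sq_mul_sq _ _ _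

lemma frobenius_norm_conjTranspose_mul_le {R : Type*} [NonUnitalSeminormedRing R] [StarAddMonoid R]
    [NormedStarGroup R] (A : Matrix r m R) (B : Matrix r n R) : ‖Aᴴ * B‖ ≤ ‖A‖ * ‖B‖ := by
  simpa only [Matrix.frobenius_norm_conjTranspose] using frobenius_norm_mul_le Aᴴ B

lemma frobenius_norm_mul_sub_mul_le {R : Type*} [NonUnitalSeminormedRing R] {M : ℝ}
    {A A' : Matrix m r R} {B B' : Matrix r n R} (hA : ‖A‖ ≤ M) (hB' : ‖B'‖ ≤ M) :
    ‖A' * B' - A * B‖ ≤ M * (‖A' - A‖ + ‖B' - B‖) := by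
  calc ‖A' * B' - A * B‖ = ‖(A' - A) * B' + A * (B' - B)‖ := by
        rw [Matrix.sub_mul, Matrix.mul_sub, sub_add_sub_cancel]
    _ ≤ ‖A' - A‖ * ‖B'‖ + ‖A‖ * ‖B' - B‖ :=
        norm_add_le_of_le (frobenius_norm_mul_le _ _) (frobenius_norm_mul_le _ _)
    _ ≤ ‖A' - A‖ * M + M * ‖B' - B‖ := by gcongr
    _ = M * (‖A' - A‖ + ‖B' - B‖) := by ring

/-- The Frobenius inner product on matrices, the sum of the inner products of the entries. Like the
Frobenius norm that it induces, it is only activated locally. -/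
noncomputable abbrev frobeniusInnerProductSpace {𝕜 E : Type*} [RCLike 𝕜] [NormedAddCommGroup E]
    [InnerProductSpace 𝕜 E] : InnerProductSpace 𝕜 (Matrix m n E) where
  inner A B := ∑ i, ∑ j, inner 𝕜 (A i j) (B i j)
  norm_sq_eq_re_inner A := by simp [frobenius_norm_sq]
  conj_inner_symm A B := by simp
  add_left A B C := by simp [inner_add_left, Finset.sum_add_distrib]
  smul_left A B c := by simp [inner_smul_left, Finset.mul_sum]

attribute [local instance] frobeniusInnerProductSpace

lemma frobenius_inner_def {𝕜 E : Type*} [RCLike 𝕜] [NormedAddCommGroup E] [InnerProductSpace 𝕜 E]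
    (A B : Matrix m n E) : inner 𝕜 A B = ∑ i, ∑ j, inner 𝕜 (A i j) (B i j) := rfl

lemma quaternion_inner_mul_right (a b c : ℍ[ℝ]) : ⟪a, b * c⟫ = ⟪a * star c, b⟫ := by
  rw [Quaternion.inner_def, Quaternion.inner_def, star_mul, mul_assoc]

lemma quaternion_inner_star_star (a b : ℍ[ℝ]) : ⟪star a, star b⟫ = ⟪a, b⟫ := by
  simp only [Quaternion.inner_def, Quaternion.re_mul, Quaternion.re_star, Quaternion.imI_star,
    Quaternion.imJ_star, Quaternion.imK_star]
  ring

lemma frobenius_inner_conjTranspose (A B : Matrix m n ℍ[ℝ]) : ⟪Aᴴ, Bᴴ⟫ = ⟪A, B⟫ := by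
  simp only [frobenius_inner_def, Matrix.conjTranspose_apply, quaternion_inner_star_star]
  exact Finset.sum_comm

lemma frobenius_inner_mul_right (R : Matrix m n ℍ[ℝ]) (C : Matrix m r ℍ[ℝ])
    (B : Matrix r n ℍ[ℝ]) : ⟪R, C * B⟫ = ⟪R * Bᴴ, C⟫ := by
  simp only [frobenius_inner_def, Matrix.mul_apply, inner_sum, sum_inner,
    Matrix.conjTranspose_apply, quaternion_inner_mul_right]
  exact Finset.sum_congr rfl fun i _ => Finset.sum_comm

lemma frobenius_inner_mul_left (R : Matrix m n ℍ[ℝ]) (C : Matrix m r ℍ[ℝ])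
    (B : Matrix r n ℍ[ℝ]) : ⟪R, C * B⟫ = ⟪Cᴴ * R, B⟫ := by
  rw [← frobenius_inner_conjTranspose, Matrix.conjTranspose_mul, frobenius_inner_mul_right,
    Matrix.conjTranspose_conjTranspose, ← frobenius_inner_conjTranspose (Cᴴ * R),
    Matrix.conjTranspose_mul, Matrix.conjTranspose_conjTranspose]

lemma isUnit_mul_conjTranspose_add_smul_one [DecidableEq r] (B : Matrix r n ℍ[ℝ]) {lam : ℝ}
    (hlam : 0 < lam) : IsUnit (B * Bᴴ + lam • (1 : Matrix r r ℍ[ℝ])) := by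
  rw [IsArtinianRing.isUnit_iff_isRightRegular, isRightRegular_iff_left_eq_zero_of_mul]
  intro C hC
  have hquad : ⟪C * (B * Bᴴ + lam • (1 : Matrix r r ℍ[ℝ])), C⟫ = ‖C * B‖ ^ 2 + lam * ‖C‖ ^ 2 := by
    rw [Matrix.mul_add, ← Matrix.mul_assoc, Matrix.mul_smul, Matrix.mul_one, inner_add_left,
      ← frobenius_inner_mul_right, real_inner_smul_left, real_inner_self_eq_norm_sq,
      real_inner_self_eq_norm_sq]
  rw [hC, inner_zero_left] at hquad
  have : ‖C‖ ^ 2 = 0 := by nlinarith [sq_nonneg ‖C * B‖, sq_nonneg ‖C‖]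
  simpa using this

end Frobenius

section LRQD

open scoped Matrix.Norms.Frobenius RealInnerProductSpace Topology

attribute [local instance] frobeniusInnerProductSpace

variable {m n r : Type*}

lemma norm_sq_add_two_mul_inner_le {E : Type*} [SeminormedAddCommGroup E] [InnerProductSpace ℝ E]
    (u w : E) : ‖u‖ ^ 2 + 2 * ⟪u, w⟫ ≤ ‖u + w‖ ^ 2 := by
  rw [norm_add_sq_real]
  exact le_add_of_nonneg_right (sq_nonneg ‖w‖)

/-- The point `(A, B, X)` of the search space, which carries the Euclidean product of the three
Frobenius norms; the nesting reflects that `WithLp` only treats binary products. -/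
def lrqdTriple (A : Matrix m r ℍ[ℝ]) (B : Matrix r n ℍ[ℝ]) (X : Matrix m n ℍ[ℝ]) :
    WithLp 2 (Matrix m r ℍ[ℝ] × WithLp 2 (Matrix r n ℍ[ℝ] × Matrix m n ℍ[ℝ])) :=
  WithLp.toLp 2 (A, WithLp.toLp 2 (B, X))

variable [Fintype m] [Fintype n] [Fintype r]

/-- The objective `f (A, B, X) = ½ ‖A * B - X‖²`. -/
noncomputable def lrqdObjective (A : Matrix m r ℍ[ℝ])
    (B : Matrix r n ℍ[ℝ]) (X : Matrix m n ℍ[ℝ]) : ℝ :=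
  1 / 2 * ‖A * B - X‖ ^ 2

lemma dist_lrqdTriple (A A' : Matrix m r ℍ[ℝ])
    (B B' : Matrix r n ℍ[ℝ]) (X X' : Matrix m n ℍ[ℝ]) :
    dist (lrqdTriple A B X) (lrqdTriple A' B' X') =
      √(‖A - A'‖ ^ 2 + ‖B - B'‖ ^ 2 + ‖X - X'‖ ^ 2) := by
  rw [WithLp.prod_dist_eq_of_L2, WithLp.prod_dist_eq_of_L2, Real.sq_sqrt (by positivity),
    dist_eq_norm, dist_eq_norm, dist_eq_norm, ← add_assoc]
  rfl

lemma norm_left_sub_le_dist_lrqdTriple (A A' : Matrix m r ℍ[ℝ])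
    (B B' : Matrix r n ℍ[ℝ]) (X X' : Matrix m n ℍ[ℝ]) :
    ‖A - A'‖ ≤ dist (lrqdTriple A B X) (lrqdTriple A' B' X') := by
  rw [dist_lrqdTriple]
  exact Real.le_sqrt_of_sq_le (by rw [add_assoc]; exact le_add_of_nonneg_right (by positivity))

lemma norm_right_sub_le_dist_lrqdTriple (A A' : Matrix m r ℍ[ℝ])
    (B B' : Matrix r n ℍ[ℝ]) (X X' : Matrix m n ℍ[ℝ]) :
    ‖B - B'‖ ≤ dist (lrqdTriple A B X) (lrqdTriple A' B' X') := by
  rw [dist_lrqdTriple]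
  exact Real.le_sqrt_of_sq_le
    (le_add_of_le_of_nonneg (le_add_of_nonneg_left (by positivity)) (by positivity))

lemma norm_completion_sub_le_dist_lrqdTriple (A A' : Matrix m r ℍ[ℝ])
    (B B' : Matrix r n ℍ[ℝ]) (X X' : Matrix m n ℍ[ℝ]) :
    ‖X - X'‖ ≤ dist (lrqdTriple A B X) (lrqdTriple A' B' X') := by
  rw [dist_lrqdTriple]
  exact Real.le_sqrt_of_sq_le (le_add_of_nonneg_left (by positivity))

lemma tendsto_lrqdObjective {ι : Type*} {l : Filter ι}
    {A : ι → Matrix m r ℍ[ℝ]} {B : ι → Matrix r n ℍ[ℝ]} {X : ι → Matrix m n ℍ[ℝ]}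
    {A' : Matrix m r ℍ[ℝ]} {B' : Matrix r n ℍ[ℝ]} {X' : Matrix m n ℍ[ℝ]}
    (h : Tendsto (fun i => dist (lrqdTriple (A i) (B i) (X i)) (lrqdTriple A' B' X')) l (𝓝 0)) :
    Tendsto (fun i => lrqdObjective (A i) (B i) (X i)) l (𝓝 (lrqdObjective A' B' X')) := by
  have hA : Tendsto A l (𝓝 A') := tendsto_iff_norm_sub_tendsto_zero.2 <|
    squeeze_zero (fun _ => norm_nonneg _) (fun _ => norm_left_sub_le_dist_lrqdTriple ..) h
  have hB : Tendsto B l (𝓝 B') := tendsto_iff_norm_sub_tendsto_zero.2 <|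
    squeeze_zero (fun _ => norm_nonneg _) (fun _ => norm_right_sub_le_dist_lrqdTriple ..) h
  have hX : Tendsto X l (𝓝 X') := tendsto_iff_norm_sub_tendsto_zero.2 <|
    squeeze_zero (fun _ => norm_nonneg _) (fun _ => norm_completion_sub_le_dist_lrqdTriple ..) h
  exact (((tendsto_matrix_mul hA hB).sub hX).norm.pow 2).const_mul _

/-- The iterates of the LRQD algorithm for the data matrix `D`, observed on `Ω`, with proximal
parameter `lam`. -/
structure IsLRQDSequence [DecidableEq r]
    (D : Matrix m n ℍ[ℝ]) (Ω : Set (m × n)) (lam : ℝ) (A : ℕ → Matrix m r ℍ[ℝ])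
    (B : ℕ → Matrix r n ℍ[ℝ]) (X : ℕ → Matrix m n ℍ[ℝ]) : Prop where
  apply_of_mem : ∀ k, ∀ p ∈ Ω, X k p.1 p.2 = D p.1 p.2
  apply_of_notMem : ∀ k, ∀ p : m × n, p ∉ Ω → X k p.1 p.2 = (A k * B k) p.1 p.2
  left_succ : ∀ k, A (k + 1) = (X k * (B k)ᴴ + lam • A k) *
    Ring.inverse (B k * (B k)ᴴ + lam • (1 : Matrix r r ℍ[ℝ]))
  right_succ : ∀ k, B (k + 1) =
    Ring.inverse ((A (k + 1))ᴴ * A (k + 1) + lam • (1 : Matrix r r ℍ[ℝ])) *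
      ((A (k + 1))ᴴ * X k + lam • B k)

namespace IsLRQDSequence

variable [DecidableEq r] {D : Matrix m n ℍ[ℝ]}
  {Ω : Set (m × n)} {lam : ℝ} {A : ℕ → Matrix m r ℍ[ℝ]} {B : ℕ → Matrix r n ℍ[ℝ]}
  {X : ℕ → Matrix m n ℍ[ℝ]}

lemma left_gradient_eq (hZ : IsLRQDSequence D Ω lam A B X) (hlam : 0 < lam) (k : ℕ) :
    (A (k + 1) * B k - X k) * (B k)ᴴ = lam • (A k - A (k + 1)) := by
  have hnormal : A (k + 1) * (B k * (B k)ᴴ + lam • (1 : Matrix r r ℍ[ℝ])) =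
      X k * (B k)ᴴ + lam • A k := by
    rw [hZ.left_succ, Matrix.mul_assoc,
      Ring.inverse_mul_cancel _ (isUnit_mul_conjTranspose_add_smul_one (B k) hlam), Matrix.mul_one]
  rw [Matrix.mul_add, Matrix.mul_smul, Matrix.mul_one, ← Matrix.mul_assoc] at hnormal
  rw [Matrix.sub_mul, smul_sub, sub_eq_sub_iff_add_eq_add, hnormal, add_comm]

lemma right_gradient_eq (hZ : IsLRQDSequence D Ω lam A B X) (hlam : 0 < lam) (k : ℕ) :
    (A (k + 1))ᴴ * (A (k + 1) * B (k + 1) - X k) = lam • (B k - B (k + 1)) := by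
  have hunit := isUnit_mul_conjTranspose_add_smul_one (A (k + 1))ᴴ hlam
  rw [Matrix.conjTranspose_conjTranspose] at hunit
  have hnormal : ((A (k + 1))ᴴ * A (k + 1) + lam • (1 : Matrix r r ℍ[ℝ])) * B (k + 1) =
      (A (k + 1))ᴴ * X k + lam • B k := by
    rw [hZ.right_succ, ← Matrix.mul_assoc, Ring.mul_inverse_cancel _ hunit, Matrix.one_mul]
  rw [Matrix.add_mul, Matrix.smul_mul, Matrix.one_mul, Matrix.mul_assoc] at hnormal
  rw [Matrix.mul_sub, smul_sub, sub_eq_sub_iff_add_eq_add, hnormal, add_comm]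

lemma left_decrease (hZ : IsLRQDSequence D Ω lam A B X) (hlam : 0 < lam) (k : ℕ) :
    ‖A (k + 1) * B k - X k‖ ^ 2 + 2 * lam * ‖A k - A (k + 1)‖ ^ 2 ≤ ‖A k * B k - X k‖ ^ 2 := by
  have hsplit : A k * B k - X k = (A (k + 1) * B k - X k) + (A k - A (k + 1)) * B k := by
    rw [Matrix.sub_mul]; abel
  have hinner : ⟪A (k + 1) * B k - X k, (A k - A (k + 1)) * B k⟫ =
      lam * ‖A k - A (k + 1)‖ ^ 2 := by
    rw [frobenius_inner_mul_right, hZ.left_gradient_eq hlam, real_inner_smul_left,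
      real_inner_self_eq_norm_sq]
  rw [hsplit, mul_assoc, ← hinner]
  exact norm_sq_add_two_mul_inner_le _ _

lemma right_decrease (hZ : IsLRQDSequence D Ω lam A B X) (hlam : 0 < lam) (k : ℕ) :
    ‖A (k + 1) * B (k + 1) - X k‖ ^ 2 + 2 * lam * ‖B k - B (k + 1)‖ ^ 2 ≤
      ‖A (k + 1) * B k - X k‖ ^ 2 := by
  have hsplit : A (k + 1) * B k - X k =
      (A (k + 1) * B (k + 1) - X k) + A (k + 1) * (B k - B (k + 1)) := by
    rw [Matrix.mul_sub]; abel
  have hinner : ⟪A (k + 1) * B (k + 1) - X k, A (k + 1) * (B k - B (k + 1))⟫ =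
      lam * ‖B k - B (k + 1)‖ ^ 2 := by
    rw [frobenius_inner_mul_left, hZ.right_gradient_eq hlam, real_inner_smul_left,
      real_inner_self_eq_norm_sq]
  rw [hsplit, mul_assoc, ← hinner]
  exact norm_sq_add_two_mul_inner_le _ _

lemma norm_residual_succ_le (hZ : IsLRQDSequence D Ω lam A B X) (k : ℕ) :
    ‖A (k + 1) * B (k + 1) - X (k + 1)‖ ≤ ‖A (k + 1) * B (k + 1) - X k‖ := by
  refine frobenius_norm_mono fun i j => ?_
  by_cases hij : (i, j) ∈ Ω
  · simp only [Matrix.sub_apply, hZ.apply_of_mem _ _ hij, le_refl]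
  · simp only [Matrix.sub_apply, hZ.apply_of_notMem (k + 1) _ hij, sub_self, norm_zero,
      norm_nonneg]

lemma norm_completion_sub_le (hZ : IsLRQDSequence D Ω lam A B X) (k l : ℕ) :
    ‖X k - X l‖ ≤ ‖A k * B k - A l * B l‖ := by
  refine frobenius_norm_mono fun i j => ?_
  by_cases hij : (i, j) ∈ Ω
  · simp only [Matrix.sub_apply, hZ.apply_of_mem _ _ hij, sub_self, norm_zero, norm_nonneg]
  · simp only [Matrix.sub_apply, hZ.apply_of_notMem _ _ hij, le_refl]

lemma objective_succ_add_le (hZ : IsLRQDSequence D Ω lam A B X) (hlam : 0 < lam) (k : ℕ) :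
    lrqdObjective (A (k + 1)) (B (k + 1)) (X (k + 1)) +
        lam * (‖A k - A (k + 1)‖ ^ 2 + ‖B k - B (k + 1)‖ ^ 2) ≤
      lrqdObjective (A k) (B k) (X k) := by
  have hX := pow_le_pow_left₀ (norm_nonneg _) (hZ.norm_residual_succ_le k) 2
  unfold lrqdObjective
  linarith [hZ.left_decrease hlam k, hZ.right_decrease hlam k]

lemma norm_left_gradient_le (hZ : IsLRQDSequence D Ω lam A B X) (hlam : 0 < lam) {M : ℝ}
    (hB : ∀ k, ‖B k‖ ≤ M) (k : ℕ) :
    ‖(A k * B k - X k) * (B k)ᴴ‖ ≤ (lam + M ^ 2) * ‖A k - A (k + 1)‖ := by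
  have hsplit : (A k * B k - X k) * (B k)ᴴ =
      lam • (A k - A (k + 1)) + (A k - A (k + 1)) * (B k * (B k)ᴴ) := by
    rw [← hZ.left_gradient_eq hlam, ← Matrix.mul_assoc, ← Matrix.add_mul, Matrix.sub_mul _ _ (B k)]
    congr 1
    abel
  have hBB : ‖B k * (B k)ᴴ‖ ≤ M ^ 2 := by
    calc ‖B k * (B k)ᴴ‖ ≤ ‖B k‖ * ‖(B k)ᴴ‖ := frobenius_norm_mul_le _ _
      _ = ‖B k‖ ^ 2 := by rw [Matrix.frobenius_norm_conjTranspose, sq]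
      _ ≤ M ^ 2 := pow_le_pow_left₀ (norm_nonneg _) (hB k) 2
  calc ‖(A k * B k - X k) * (B k)ᴴ‖
      ≤ lam * ‖A k - A (k + 1)‖ + ‖A k - A (k + 1)‖ * ‖B k * (B k)ᴴ‖ := by
        rw [hsplit]
        exact norm_add_le_of_le (norm_smul_of_nonneg hlam.le _).le (frobenius_norm_mul_le _ _)
    _ ≤ lam * ‖A k - A (k + 1)‖ + ‖A k - A (k + 1)‖ * M ^ 2 := by gcongr
    _ = (lam + M ^ 2) * ‖A k - A (k + 1)‖ := by ring

lemma norm_right_gradient_le (hZ : IsLRQDSequence D Ω lam A B X) (hlam : 0 < lam) {M : ℝ}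
    (hA : ∀ k, ‖A k‖ ≤ M) (hB : ∀ k, ‖B k‖ ≤ M) (hX : ∀ k, ‖X k‖ ≤ M) (k : ℕ) :
    ‖(A k)ᴴ * (A k * B k - X k)‖ ≤
      (2 * M ^ 2 + M) * ‖A k - A (k + 1)‖ + (lam + M ^ 2) * ‖B k - B (k + 1)‖ := by
  have hM : 0 ≤ M := (norm_nonneg _).trans (hA k)
  have hsplit : (A k)ᴴ * (A k * B k - X k) = lam • (B k - B (k + 1)) +
      (A k - A (k + 1))ᴴ * (A k * B k - X k) +
        (A (k + 1))ᴴ * (A k * B k - A (k + 1) * B (k + 1)) := by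
    rw [← hZ.right_gradient_eq hlam]
    simp only [Matrix.conjTranspose_sub, Matrix.mul_sub, Matrix.sub_mul]
    abel
  have hresidual : ‖A k * B k - X k‖ ≤ M ^ 2 + M := by
    calc ‖A k * B k - X k‖ ≤ ‖A k‖ * ‖B k‖ + ‖X k‖ :=
          norm_sub_le_of_le (frobenius_norm_mul_le _ _) le_rfl
      _ ≤ M * M + M := add_le_add (mul_le_mul (hA k) (hB k) (norm_nonneg _) hM) (hX k)
      _ = M ^ 2 + M := by ring
  calc ‖(A k)ᴴ * (A k * B k - X k)‖
      ≤ ‖lam • (B k - B (k + 1))‖ + ‖(A k - A (k + 1))ᴴ * (A k * B k - X k)‖ +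
          ‖(A (k + 1))ᴴ * (A k * B k - A (k + 1) * B (k + 1))‖ := by
        rw [hsplit]
        exact norm_add₃_le
    _ ≤ lam * ‖B k - B (k + 1)‖ + ‖A k - A (k + 1)‖ * ‖A k * B k - X k‖ +
          ‖A (k + 1)‖ * ‖A k * B k - A (k + 1) * B (k + 1)‖ := by
        rw [norm_smul_of_nonneg hlam.le]
        gcongr <;> exact frobenius_norm_conjTranspose_mul_le _ _
    _ ≤ lam * ‖B k - B (k + 1)‖ + ‖A k - A (k + 1)‖ * (M ^ 2 + M) +
          M * (M * (‖A k - A (k + 1)‖ + ‖B k - B (k + 1)‖)) := by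
        gcongr
        · exact hA (k + 1)
        · exact frobenius_norm_mul_sub_mul_le (hA (k + 1)) (hB k)
    _ = (2 * M ^ 2 + M) * ‖A k - A (k + 1)‖ + (lam + M ^ 2) * ‖B k - B (k + 1)‖ := by ring

lemma dist_sq_le (hZ : IsLRQDSequence D Ω lam A B X) {M : ℝ} (hA : ∀ k, ‖A k‖ ≤ M)
    (hB : ∀ k, ‖B k‖ ≤ M) (k : ℕ) :
    dist (lrqdTriple (A k) (B k) (X k)) (lrqdTriple (A (k + 1)) (B (k + 1)) (X (k + 1))) ^ 2 ≤
      (1 + 2 * M ^ 2) * (‖A k - A (k + 1)‖ ^ 2 + ‖B k - B (k + 1)‖ ^ 2) := by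
  have hX : ‖X k - X (k + 1)‖ ≤ M * (‖A k - A (k + 1)‖ + ‖B k - B (k + 1)‖) :=
    (hZ.norm_completion_sub_le k (k + 1)).trans
      (frobenius_norm_mul_sub_mul_le (hA (k + 1)) (hB k))
  have hXsq : ‖X k - X (k + 1)‖ ^ 2 ≤
      M ^ 2 * (2 * (‖A k - A (k + 1)‖ ^ 2 + ‖B k - B (k + 1)‖ ^ 2)) := by
    calc ‖X k - X (k + 1)‖ ^ 2
        ≤ (M * (‖A k - A (k + 1)‖ + ‖B k - B (k + 1)‖)) ^ 2 :=
          pow_le_pow_left₀ (norm_nonneg _) hX 2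
      _ ≤ _ := by
          rw [mul_pow]
          gcongr
          exact add_sq_le
  rw [dist_lrqdTriple, Real.sq_sqrt (by positivity)]
  linarith

lemma objective_succ_add_dist_sq_le (hZ : IsLRQDSequence D Ω lam A B X) (hlam : 0 < lam) {M : ℝ}
    (hA : ∀ k, ‖A k‖ ≤ M) (hB : ∀ k, ‖B k‖ ≤ M) (k : ℕ) :
    lrqdObjective (A (k + 1)) (B (k + 1)) (X (k + 1)) + lam / (1 + 2 * M ^ 2) *
        dist (lrqdTriple (A k) (B k) (X k)) (lrqdTriple (A (k + 1)) (B (k + 1)) (X (k + 1))) ^ 2 ≤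
      lrqdObjective (A k) (B k) (X k) := by
  refine le_trans (add_le_add_right ?_ _) (hZ.objective_succ_add_le hlam k)
  rw [div_mul_eq_mul_div, div_le_iff₀ (by positivity), mul_assoc, mul_comm _ (1 + 2 * M ^ 2)]
  exact mul_le_mul_of_nonneg_left (hZ.dist_sq_le hA hB k) hlam.le

lemma norm_gradient_le (hZ : IsLRQDSequence D Ω lam A B X) (hlam : 0 < lam) {M : ℝ}
    (hA : ∀ k, ‖A k‖ ≤ M) (hB : ∀ k, ‖B k‖ ≤ M) (hX : ∀ k, ‖X k‖ ≤ M) (k : ℕ) :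
    ‖(A k * B k - X k) * (B k)ᴴ‖ + ‖(A k)ᴴ * (A k * B k - X k)‖ ≤ (2 * lam + 4 * M ^ 2 + M) *
      dist (lrqdTriple (A k) (B k) (X k)) (lrqdTriple (A (k + 1)) (B (k + 1)) (X (k + 1))) := by
  set δ := dist (lrqdTriple (A k) (B k) (X k)) (lrqdTriple (A (k + 1)) (B (k + 1)) (X (k + 1)))
  have hM : 0 ≤ M := (norm_nonneg _).trans (hA k)
  have hstepA : ‖A k - A (k + 1)‖ ≤ δ := norm_left_sub_le_dist_lrqdTriple ..
  have hstepB : ‖B k - B (k + 1)‖ ≤ δ := norm_right_sub_le_dist_lrqdTriple ..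
  calc ‖(A k * B k - X k) * (B k)ᴴ‖ + ‖(A k)ᴴ * (A k * B k - X k)‖
      ≤ (lam + M ^ 2) * ‖A k - A (k + 1)‖ + ((2 * M ^ 2 + M) * ‖A k - A (k + 1)‖ +
          (lam + M ^ 2) * ‖B k - B (k + 1)‖) :=
        add_le_add (hZ.norm_left_gradient_le hlam hB k)
          (hZ.norm_right_gradient_le hlam hA hB hX k)
    _ ≤ (lam + M ^ 2) * δ + ((2 * M ^ 2 + M) * δ + (lam + M ^ 2) * δ) := by gcongr
    _ = (2 * lam + 4 * M ^ 2 + M) * δ := by ring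

theorem exists_dist_le_mul_rpow (hZ : IsLRQDSequence D Ω lam A B X) (hlam : 0 < lam) {M : ℝ}
    (hA : ∀ k, ‖A k‖ ≤ M) (hB : ∀ k, ‖B k‖ ≤ M) (hX : ∀ k, ‖X k‖ ≤ M)
    {A' : Matrix m r ℍ[ℝ]} {B' : Matrix r n ℍ[ℝ]} {X' : Matrix m n ℍ[ℝ]}
    (hlim : Tendsto (fun k => dist (lrqdTriple (A k) (B k) (X k)) (lrqdTriple A' B' X'))
      atTop (𝓝 0))
    {θ μ : ℝ} (hθ0 : 1 / 2 < θ) (hθ1 : θ < 1) (hμ : 0 < μ)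
    (hKL : ∀ k, |lrqdObjective (A k) (B k) (X k) - lrqdObjective A' B' X'| ^ θ ≤
      μ * (‖(A k * B k - X k) * (B k)ᴴ‖ + ‖(A k)ᴴ * (A k * B k - X k)‖)) :
    ∃ β : ℝ, 0 < β ∧ ∀ k : ℕ, 1 ≤ k →
      dist (lrqdTriple (A k) (B k) (X k)) (lrqdTriple A' B' X') ≤
        β * (k : ℝ) ^ (-(1 - θ) / (2 * θ - 1)) := by
  have hM : 0 ≤ M := (norm_nonneg _).trans (hA 0)
  have hdecrease := hZ.objective_succ_add_dist_sq_le hlam hA hB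
  have hanti : Antitone fun k => lrqdObjective (A k) (B k) (X k) :=
    antitone_nat_of_succ_le fun k => le_of_add_le_of_nonneg_left (hdecrease k) (by positivity)
  have hgap (k) : 0 ≤ lrqdObjective (A k) (B k) (X k) - lrqdObjective A' B' X' :=
    sub_nonneg.2 (hanti.le_of_tendsto (tendsto_lrqdObjective hlim) k)
  refine exists_dist_le_mul_rpow_of_kurdykaLojasiewicz
    (c := lam / (1 + 2 * M ^ 2)) (C := μ * (2 * lam + 4 * M ^ 2 + M)) hθ0 hθ1
    (by positivity) (by positivity) hgap (fun k => ?_) (fun k => ?_)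
    (tendsto_iff_dist_tendsto_zero.2 hlim)
  · linarith [hdecrease k]
  · rw [mul_assoc, ← abs_of_nonneg (hgap k)]
    exact (hKL k).trans (mul_le_mul_of_nonneg_left (hZ.norm_gradient_le hlam hA hB hX k) hμ.le)

end IsLRQDSequence

end LRQD

section Fin

open scoped Matrix.Norms.Frobenius

variable {m n r : ℕ}

lemma frob_eq_norm (A : Matrix (Fin m) (Fin n) ℍ[ℝ]) : frob A = ‖A‖ := by
  rw [frob, ← frobenius_norm_sq, Real.sqrt_sq (norm_nonneg A)]

lemma tnorm_sub_eq_dist (A A' : Matrix (Fin m) (Fin r) ℍ[ℝ]) (B B' : Matrix (Fin r) (Fin n) ℍ[ℝ])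
    (X X' : Matrix (Fin m) (Fin n) ℍ[ℝ]) :
    tnorm (A - A') (B - B') (X - X') = dist (lrqdTriple A B X) (lrqdTriple A' B' X') := by
  simp only [tnorm, frob_eq_norm, dist_lrqdTriple]

lemma pgnorm_le {Ω : Set (Fin m × Fin n)} [DecidablePred (· ∈ Ω)]
    {A : Matrix (Fin m) (Fin r) ℍ[ℝ]} {B : Matrix (Fin r) (Fin n) ℍ[ℝ]}
    {X : Matrix (Fin m) (Fin n) ℍ[ℝ]}
    (hX : ∀ p : Fin m × Fin n, p ∉ Ω → X p.1 p.2 = (A * B) p.1 p.2) :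
    pgnorm Ω A B X ≤ ‖(A * B - X) * Bᴴ‖ + ‖Aᴴ * (A * B - X)‖ := by
  have hoff : ∑ p : Fin m × Fin n, (if p ∈ Ω then 0 else ‖(X - A * B) p.1 p.2‖ ^ 2) = 0 := by
    refine Finset.sum_eq_zero fun p _ => ?_
    split_ifs with hp
    · rfl
    · simp [hX p hp]
  rw [pgnorm, hoff, add_zero, frob_eq_norm, frob_eq_norm, Real.sqrt_le_left (by positivity)]
  exact pow_add_pow_le (norm_nonneg _) (norm_nonneg _) two_ne_zero

end Fin

/-- Sublinear convergence rate of the LRQD sequence under the KL inequality with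
exponent θ ∈ (1/2, 1). -/
theorem LRQD_sublinear_rate {m r n : ℕ}
    (D : Matrix (Fin m) (Fin n) ℍ[ℝ]) (Ω : Set (Fin m × Fin n)) [DecidablePred (· ∈ Ω)]
    (lam : ℝ) (hlam : 0 < lam)
    (A : ℕ → Matrix (Fin m) (Fin r) ℍ[ℝ]) (B : ℕ → Matrix (Fin r) (Fin n) ℍ[ℝ])
    (X : ℕ → Matrix (Fin m) (Fin n) ℍ[ℝ])
    (hXin : ∀ k, ∀ p ∈ Ω, X k p.1 p.2 = D p.1 p.2)
    (hXout : ∀ k, ∀ p : Fin m × Fin n, p ∉ Ω → X k p.1 p.2 = (A k * B k) p.1 p.2)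
    (hA : ∀ k, A (k + 1) = (X k * (B k)ᴴ + lam • A k) *
      Ring.inverse (B k * (B k)ᴴ + lam • (1 : Matrix (Fin r) (Fin r) ℍ[ℝ])))
    (hB : ∀ k, B (k + 1) =
      Ring.inverse ((A (k + 1))ᴴ * A (k + 1) + lam • (1 : Matrix (Fin r) (Fin r) ℍ[ℝ])) *
      ((A (k + 1))ᴴ * X k + lam • B k))
    (hbdd : ∃ M : ℝ, ∀ k, frob (A k) ≤ M ∧ frob (B k) ≤ M ∧ frob (X k) ≤ M)
    (Asharp : Matrix (Fin m) (Fin r) ℍ[ℝ]) (Bsharp : Matrix (Fin r) (Fin n) ℍ[ℝ])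
    (Xsharp : Matrix (Fin m) (Fin n) ℍ[ℝ])
    (hconv : Tendsto (fun k => tnorm (A k - Asharp) (B k - Bsharp) (X k - Xsharp))
      atTop (nhds 0))
    (θ : ℝ) (hθ : 1 / 2 < θ ∧ θ < 1) (μ : ℝ) (hμ : 0 < μ)
    (hKL : ∀ k, |(1 / 2) * frob (A k * B k - X k) ^ 2 -
        (1 / 2) * frob (Asharp * Bsharp - Xsharp) ^ 2| ^ θ ≤
      μ * pgnorm Ω (A k) (B k) (X k)) :
    ∃ β : ℝ, 0 < β ∧ ∀ k : ℕ, 1 ≤ k →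
      tnorm (A k - Asharp) (B k - Bsharp) (X k - Xsharp) ≤
        β * (k : ℝ) ^ (-(1 - θ) / (2 * θ - 1)) := by
  have hZ : IsLRQDSequence D Ω lam A B X := ⟨hXin, hXout, hA, hB⟩
  obtain ⟨M, hM⟩ := hbdd
  simp only [frob_eq_norm] at hM hKL
  simp only [tnorm_sub_eq_dist] at hconv ⊢
  exact hZ.exists_dist_le_mul_rpow hlam (fun k => (hM k).1) (fun k => (hM k).2.1)
    (fun k => (hM k).2.2) hconv hθ.1 hθ.2 hμ fun k =>
      (hKL k).trans (mul_le_mul_of_nonneg_left (pgnorm_le (hXout k)) hμ.le)
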